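/- arXiv:1804.03254 — 9 statements merged into one kernel-verified Lean document; each statement's English description precedes it below -/
import Mathlib

section
/- Let θ be an infinite cardinal and let μ ≤ λ be infinite cardinals with λ^{<θ} = λ. Then there exists a family 𝒢 of pairwise distinct functions from λ to μ with |𝒢| = 2^λ which is independent in the following sense: for every subfamily 𝒢₀ ⊆ 𝒢 with |𝒢₀| < θ and every assignment v : 𝒢₀ → μ such that v(g) lies in the range of g for each g ∈ 𝒢₀, there exists t < λ with g(t) = v(g) for all g ∈ 𝒢₀. -/
open Cardinal

theorem ek_core
    (l mu th : Cardinal.{u}) (hth : ℵ₀ ≤ th) (hl : ℵ₀ ≤ l)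
    (hmul : mu ≤ l) (hpow : l ^< th = l)
    (L M : Type u) (hL : #L = l) (hM : #M = mu) [Nonempty M] :
    ∃ F : Set L → L → M, ∀ A₀ : Set (Set L), #A₀ < th → ∀ v : Set L → M,
      ∃ t : L, ∀ A ∈ A₀, F A t = v A := by
  classical
  have hle : ∀ k < th, l ^ k ≤ l := fun k hk => (le_powerlt l hk).trans hpow.le
  have hthl : th ≤ l := by
    by_contra h
    push Not at h
    have h2 : 1 < l := one_lt_aleph0.trans_le hl
    exact absurd (hle l h) (not_le.2 (cantor' l h2))
  have hLne : Nonempty L := by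
    rw [← mk_ne_zero_iff, hL]; exact (aleph0_pos.trans_le hl).ne'
  let W := th.ord.ToType
  let I : W → Type u := fun w => Set.Iio w
  have hI : ∀ w, #(I w) < th := fun w => mk_Iio_toType_ord_lt w
  let T : Type u := Σ w : W, ((I w × I w → L) × (I w → Set (I w × I w))) × (I w → M)
  have hT : #T ≤ #L := by
    rw [mk_sigma, hL]
    refine (Cardinal.sum_le_sum _ (fun _ => l) ?_).trans ?_
    · intro w
      have hI2 : #(I w) * #(I w) < th := mul_lt_of_lt hth (hI w) (hI w)
      have hI3 : #(I w) * #(I w) * #(I w) < th := mul_lt_of_lt hth hI2 (hI w)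
      have h1 : #(I w × I w → L) ≤ l := by
        simpa [hL] using hle _ hI2
      have h2 : #(I w → Set (I w × I w)) ≤ l := by
        have : #(I w → Set (I w × I w)) = 2 ^ (#(I w) * #(I w) * #(I w)) := by
          rw [power_mul]; simp
        rw [this]
        exact (power_le_power_right ((natCast_le_aleph0 (n := 2)).trans hl)).trans (hle _ hI3)
      have h3 : #(I w → M) ≤ l := by
        have : #(I w → M) = mu ^ #(I w) := by simp [hM]
        rw [this]
        exact (power_le_power_right hmul).trans (hle _ (hI w))
      rw [mk_prod, mk_prod]
      simp only [lift_id]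
      exact mul_le_of_le hl (mul_le_of_le hl h1 h2) h3
    · rw [sum_const']
      refine mul_le_of_le hl ?_ le_rfl
      simpa [W] using hthl
  obtain ⟨em⟩ := hT
  let g : Set L → T → M := fun A t =>
    if h : ∃ i, t.2.1.2 i = t.2.1.1 ⁻¹' A then t.2.2 h.choose else Classical.arbitrary M
  have hg : ∀ A₀ : Set (Set L), #A₀ < th → ∀ v : Set L → M,
      ∃ t : T, ∀ A ∈ A₀, g A t = v A := by
    intro A₀ hA₀ v
    have hw : ∃ w : W, Nonempty (A₀ ≃ I w) := by
      have hlt : (#A₀).ord < Ordinal.type (α := W) (· < ·) := by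
        simpa [W] using hA₀
      refine ⟨Ordinal.enum (α := W) (· < ·) ⟨_, hlt⟩, ?_⟩
      rw [← Cardinal.eq]
      have := Ordinal.typein_enum (α := W) (· < ·) hlt
      have h2 := congrArg Ordinal.card this
      rw [card_ord] at h2
      exact h2.symm
    obtain ⟨w, ⟨e⟩⟩ := hw
    have hx : ∀ p : I w × I w, ∃ y : L, p.1 ≠ p.2 →
        ¬ (y ∈ (e.symm p.1 : Set L) ↔ y ∈ (e.symm p.2 : Set L)) := by
      rintro ⟨i, j⟩
      by_contra hc
      push Not at hc
      have y0 := hLne.some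
      have hij := (hc y0).1
      apply hij
      apply e.symm.injective
      apply Subtype.ext
      ext y
      exact (hc y).2
    choose x hx using hx
    refine ⟨⟨w, (x, fun i => x ⁻¹' (e.symm i : Set L)), fun i => v (e.symm i)⟩, ?_⟩
    intro A hA
    have h : ∃ i, x ⁻¹' (e.symm i : Set L) = x ⁻¹' A := ⟨e ⟨A, hA⟩, by simp⟩
    have hch : h.choose = e ⟨A, hA⟩ := by
      by_contra hne
      have h1 := hx (h.choose, e ⟨A, hA⟩) hne
      apply h1
      have h2 := Set.ext_iff.1 h.choose_spec (h.choose, e ⟨A, hA⟩)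
      simpa using h2
    change (if h : ∃ i, x ⁻¹' (e.symm i : Set L) = x ⁻¹' A then v (e.symm h.choose)
      else Classical.arbitrary M) = v A
    rw [dif_pos h, hch]
    simp
  have hTne : Nonempty T := by
    obtain ⟨t, -⟩ := hg ∅ (by simpa using aleph0_pos.trans_le hth) (fun _ => Classical.arbitrary M)
    exact ⟨t⟩
  refine ⟨fun A y => g A (Function.invFun em y), fun A₀ h v => ?_⟩
  obtain ⟨t, ht⟩ := hg A₀ h v
  refine ⟨em t, fun A hA => ?_⟩
  simp only [Function.leftInverse_invFun em.injective t]
  exact ht A hA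

/-- **Engelking–Karłowicz** (Fact 1.2).  Let `th` be an infinite cardinal and
`mu ≤ l` infinite cardinals with `l^{<th} = l`.  Let `L` be a set of cardinality
`l` and `M` a set of cardinality `mu`.  Then there is a family `G` of (pairwise
distinct) functions `L → M` of cardinality `2^l` which is independent: for
every subfamily `G₀ ⊆ G` of cardinality `< th` and every assignment
`v : (L → M) → M` with `v g ∈ range g` for all `g ∈ G₀`, there is `t ∈ L`
with `g t = v g` for all `g ∈ G₀`. -/
theorem engelking_karlowicz
    (l mu th : Cardinal.{u}) (hth : ℵ₀ ≤ th) (hmu : ℵ₀ ≤ mu) (hl : ℵ₀ ≤ l)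
    (hmul : mu ≤ l) (hpow : l ^< th = l)
    (L M : Type u) (hL : #L = l) (hM : #M = mu) :
    ∃ G : Set (L → M), #G = 2 ^ l ∧
      ∀ G₀ ⊆ G, #G₀ < th →
        ∀ v : (L → M) → M, (∀ g ∈ G₀, v g ∈ Set.range g) →
          ∃ t : L, ∀ g ∈ G₀, g t = v g := by
  

  classical
  have hMinf : Infinite M := by rw [infinite_iff, hM]; exact hmu
  obtain ⟨F, hF⟩ := ek_core l mu th hth hl hmul hpow L M hL hM
  have hinj : Function.Injective F := by
    intro A B hAB
    by_contra hne
    obtain ⟨m₁, m₂, hm⟩ := exists_pair_ne M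
    obtain ⟨t, ht⟩ := hF {A, B} ((lt_aleph0_of_finite _).trans_le hth)
      (fun C => if C = A then m₁ else m₂)
    have h1 := ht A (by simp)
    have h2 := ht B (by simp)
    rw [if_pos rfl] at h1
    rw [if_neg (Ne.symm hne), ← hAB] at h2
    exact hm (h1.symm.trans h2)
  refine ⟨Set.range F, ?_, ?_⟩
  · rw [mk_range_eq F hinj, mk_set, hL]
  · intro G₀ hG hcard v _
    obtain ⟨t, ht⟩ := hF (F ⁻¹' G₀) ((mk_preimage_of_injective F G₀ hinj).trans_lt hcard)
      (fun A => v (F A))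
    refine ⟨t, fun g hg => ?_⟩
    obtain ⟨A, rfl⟩ := hG hg
    exact ht A hg
end

section
/- Let f ∈ ℱ, let k ≥ 1, let s ∈ 𝒮_{f,k}, and let ρ ∈ s with lg(ρ) = j < k. Then exactly f(j) of the f(j)+1 immediate successors ρ⌢⟨ℓ⟩ (ℓ ≤ f(j)) of ρ belong to s; equivalently, there is exactly one ℓ ≤ f(j) such that ρ⌢⟨ℓ⟩ ∉ s. -/
/-- `η ∈ 𝒯_f` : a finite sequence with `η(ℓ) ≤ f(ℓ)` for all `ℓ < lg(η)`. -/
def inT (f : ℕ → ℕ) (η : List ℕ) : Prop := ∀ i : Fin η.length, η.get i ≤ f i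

/-- `𝒯_{f,k}` : elements of `𝒯_f` of length exactly `k`. -/
def Tk (f : ℕ → ℕ) (k : ℕ) : Set (List ℕ) := {η | η.length = k ∧ inT f η}

/-- `𝒯_{f,[k]}` : elements of `𝒯_f` of length at most `k`. -/
def Tle (f : ℕ → ℕ) (k : ℕ) : Set (List ℕ) := {η | η.length ≤ k ∧ inT f η}

/-- `𝒯_f = ⋃_k 𝒯_{f,k}`. -/
def Tf (f : ℕ → ℕ) : Set (List ℕ) := {η | inT f η}

/-- The conditions on `s ⊆ 𝒯_{f,[k]}` prior to maximality: nonempty, closed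
under initial segment, every `⊴`-maximal node is in `𝒯_{f,k}`, and `s`
contains no full splitting `{ρ⌢⟨ℓ⟩ : ℓ ≤ f(lg ρ)}`. -/
def SBase (f : ℕ → ℕ) (k : ℕ) (s : Set (List ℕ)) : Prop :=
  s ⊆ Tle f k ∧ s.Nonempty ∧
  (∀ η ∈ s, ∀ ρ : List ℕ, ρ <+: η → ρ ∈ s) ∧
  (∀ ρ ∈ s, (∀ η ∈ s, ρ <+: η → η = ρ) → ρ.length = k) ∧
  (∀ ρ ∈ Tle f k, ¬ ∀ ℓ ≤ f ρ.length, ρ ++ [ℓ] ∈ s)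

/-- `𝒮_{f,k}` : the `k`-maximal subsets of `𝒯_{f,[k]}`, i.e. those satisfying
`SBase` and maximal under inclusion subject to it. -/
def Sk (f : ℕ → ℕ) (k : ℕ) : Set (Set (List ℕ)) :=
  {s | SBase f k s ∧ ∀ s', SBase f k s' → s ⊆ s' → s' = s}

/-- `𝒮_f = ⋃_{k ≥ 1} 𝒮_{f,k}`. -/
def Sf (f : ℕ → ℕ) : Set (Set (List ℕ)) := {s | ∃ k, 1 ≤ k ∧ s ∈ Sk f k}

/-- The restriction `η ↾ k = ⟨η 0, …, η (k-1)⟩` of `η : ℕ → ℕ`. -/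
def restr (η : ℕ → ℕ) (k : ℕ) : List ℕ := List.map η (List.range k)

/-- `lim(𝒯_f)` : branches of `𝒯_f`. -/
def limT (f : ℕ → ℕ) : Set (ℕ → ℕ) := {η | ∀ k, restr η k ∈ Tk f k}

/-- `lim(𝒮_f)` : sequences `⟨s_k : 1 ≤ k < ω⟩` with `s_k ∈ 𝒮_{f,k}`,
increasing under inclusion (the value at `0` is irrelevant). -/
def limS (f : ℕ → ℕ) : Set (ℕ → Set (List ℕ)) :=
  {ν | (∀ k, 1 ≤ k → ν k ∈ Sk f k) ∧ ∀ k k', 1 ≤ k → k < k' → ν k ⊆ ν k'}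

/-- For `f ∈ ℱ`, `k ≥ 1`, `s ∈ 𝒮_{f,k}` and `ρ ∈ s` of length `j < k`,
there is exactly one `ℓ ≤ f(j)` with `ρ⌢⟨ℓ⟩ ∉ s` (so exactly `f(j)` of the
`f(j)+1` immediate successors of `ρ` belong to `s`). -/
theorem unique_omitted_successor
    (f : ℕ → ℕ) (hf : StrictMono f) (hf0 : ∀ k, 0 < f k)
    (k : ℕ) (hk : 1 ≤ k) (s : Set (List ℕ)) (hs : s ∈ Sk f k)
    (ρ : List ℕ) (hρ : ρ ∈ s) (j : ℕ) (hj : ρ.length = j) (hjk : j < k) :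
    ∃! ℓ : ℕ, ℓ ≤ f j ∧ ρ ++ [ℓ] ∉ s := by
  obtain ⟨⟨hsub, hne, hcl, hmax, hsp⟩, hM⟩ := hs
  subst hj
  have hex := hsp ρ (hsub hρ)
  push Not at hex
  obtain ⟨a, ha, has⟩ := hex
  refine ⟨a, ⟨ha, has⟩, ?_⟩
  rintro b ⟨hb, hbs⟩
  by_contra hba
  set σ : ℕ → List ℕ := fun m => (ρ ++ [a]) ++ List.replicate m 0 with hσ
  have hlen : ∀ m, (σ m).length = ρ.length + 1 + m := by intro m; simp [hσ]; omega
  have hsucc : ∀ m, σ (m + 1) = σ m ++ [0] := by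
    intro m; simp [hσ, List.replicate_succ']
  have h0 : σ 0 = ρ ++ [a] := by simp [hσ]
  have hT : ∀ m, inT f (σ m) := by
    have key : ∀ (l : List ℕ) (x : ℕ), inT f l → x ≤ f l.length → inT f (l ++ [x]) := by
      intro l x hl hx i
      obtain ⟨i, hi⟩ := i
      simp only [List.get_eq_getElem]
      by_cases h : i < l.length
      · rw [List.getElem_append_left h]
        exact hl ⟨i, h⟩
      · have : i = l.length := by simp at hi; omega
        subst this
        simpa using hx
    intro m
    induction m with
    | zero => rw [h0]; exact key _ _ (hsub hρ).2 ha
    | succ m ih => rw [hsucc]; exact key _ _ ih (Nat.zero_le _)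
  let s' : Set (List ℕ) := s ∪ {η | ∃ m, ρ.length + 1 + m ≤ k ∧ η = σ m}
  have hbase : SBase f k s' := by
    refine ⟨?_, ⟨ρ, Or.inl hρ⟩, ?_, ?_, ?_⟩
    · rintro η (h | ⟨m, hm, rfl⟩)
      · exact hsub h
      · exact ⟨by rw [hlen]; exact hm, hT m⟩
    · rintro η (h | ⟨m, hm, rfl⟩) τ hτ
      · exact Or.inl (hcl _ h _ hτ)
      · rcases List.prefix_or_prefix_of_prefix hτ (List.prefix_append (ρ ++ [a]) _) with h | h
        · rcases List.prefix_concat_iff.1 h with h | h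
          · exact Or.inr ⟨0, by omega, by rw [h0]; exact h⟩
          · exact Or.inl (hcl _ hρ _ h)
        · obtain ⟨t, rfl⟩ := h
          have ht := (List.prefix_append_right_inj _).1 hτ
          have hl := ht.length_le
          rw [List.length_replicate] at hl
          refine Or.inr ⟨t.length, by omega, ?_⟩
          have : t = List.replicate t.length 0 :=
            List.eq_replicate_iff.2 ⟨rfl, fun x hx => List.eq_of_mem_replicate (ht.subset hx)⟩
          simp only [hσ]
          rw [← this]
    · rintro η (h | ⟨m, hm, rfl⟩) hmx
      · exact hmax η h (fun τ hτ => hmx τ (Or.inl hτ))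
      · by_contra hne
        rw [hlen] at hne
        have := hmx (σ (m + 1)) (Or.inr ⟨m + 1, by omega, rfl⟩)
          (by rw [hsucc]; exact List.prefix_append _ _)
        have := congrArg List.length this
        rw [hlen, hlen] at this
        omega
    · intro τ hτ hall
      have h1 := hsp τ hτ
      push Not at h1
      obtain ⟨c, hc, hcs⟩ := h1
      rcases hall c hc with h | ⟨m, hm, h⟩
      · exact hcs h
      · cases m with
        | zero =>
          rw [h0] at h
          obtain ⟨rfl, -⟩ := List.append_inj' h rfl
          rcases hall b hb with h2 | ⟨m, hm, h2⟩
          · exact hbs h2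
          · have hl := congrArg List.length h2
            rw [hlen] at hl
            have : m = 0 := by simp at hl; omega
            subst this
            rw [h0] at h2
            simp at h2
            exact hba h2
        | succ m =>
          rw [hsucc] at h
          obtain ⟨rfl, -⟩ := List.append_inj' h rfl
          rcases hall 1 (hf0 _) with h2 | ⟨n, hn, h2⟩
          · apply has
            refine hcl _ h2 _ ?_
            simp only [hσ]
            rw [List.append_assoc (ρ ++ [a])]
            exact List.prefix_append _ _
          · have hl := congrArg List.length h2
            rw [List.length_append, hlen, hlen] at hl
            have : n = m + 1 := by simp at hl; omega
            subst this
            rw [hsucc] at h2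
            simp at h2
  have heq := hM s' hbase Set.subset_union_left
  apply has
  rw [← heq]
  exact Or.inr ⟨0, by omega, h0.symm⟩
end

section
/- Let f ∈ ℱ and k ≥ 1. Then 𝒮_{f,k} is a finite nonempty set, and for every η ∈ 𝒯_{f,k} there exists s ∈ 𝒮_{f,k} with η ∈ s. -/
theorem Tle_finite_aux (f : ℕ → ℕ) (hf : StrictMono f) (k : ℕ) : (Tle f k).Finite := by
  have h1 : ({l : List (Set.Iic (f k)) | l.length ≤ k}).Finite := List.finite_length_le _ k
  refine (h1.image (List.map ((↑) : Set.Iic (f k) → ℕ))).subset ?_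
  rintro η ⟨hl, hη⟩
  have h2 : η ∈ Set.range (List.map ((↑) : Set.Iic (f k) → ℕ)) := by
    rw [Set.range_list_map_coe]
    intro x hx
    obtain ⟨i, rfl⟩ := List.get_of_mem hx
    exact (hη i).trans (hf.monotone (by have := i.2; omega))
  obtain ⟨l, rfl⟩ := h2
  exact ⟨l, by simpa using hl, rfl⟩

theorem SBase_prefixes_aux (f : ℕ → ℕ) (hf0 : ∀ k, 0 < f k) (k : ℕ) (η : List ℕ)
    (hη : η ∈ Tk f k) : SBase f k {ρ | ρ <+: η} := by
  obtain ⟨hl, hT⟩ := hη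
  refine ⟨?_, ⟨η, List.prefix_rfl⟩, ?_, ?_, ?_⟩
  · intro ρ hρ
    refine ⟨hl ▸ hρ.length_le, fun i => ?_⟩
    have h := hT ⟨i, i.2.trans_le hρ.length_le⟩
    have e := hρ.getElem i.2
    simp only [List.get_eq_getElem] at h ⊢
    rw [e]
    exact h
  · intro a ha b hb
    exact hb.trans ha
  · intro ρ hρ h
    rw [← h η List.prefix_rfl hρ]
    exact hl
  · intro ρ _ h
    have h0 : ρ ++ [0] <+: η := h 0 (Nat.zero_le _)
    have h1 : ρ ++ [1] <+: η := h 1 (hf0 _)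
    have := (List.prefix_of_prefix_length_le h0 h1 (by simp)).eq_of_length (by simp)
    simp at this

/-- For `f ∈ ℱ` and `k ≥ 1`, the set `𝒮_{f,k}` is finite and nonempty, and
every `η ∈ 𝒯_{f,k}` belongs to some `s ∈ 𝒮_{f,k}`. -/
theorem Sk_finite_nonempty_covers
    (f : ℕ → ℕ) (hf : StrictMono f) (hf0 : ∀ k, 0 < f k)
    (k : ℕ) (hk : 1 ≤ k) :
    (Sk f k).Finite ∧ (Sk f k).Nonempty ∧
      ∀ η ∈ Tk f k, ∃ s ∈ Sk f k, η ∈ s := by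
  have hbase : {s | SBase f k s}.Finite :=
    (Tle_finite_aux f hf k).finite_subsets.subset fun s hs => hs.1
  have hcov : ∀ η ∈ Tk f k, ∃ s ∈ Sk f k, η ∈ s := by
    intro η hη
    obtain ⟨s, hle, hs⟩ := hbase.exists_le_maximal (SBase_prefixes_aux f hf0 k η hη)
    exact ⟨s, ⟨hs.prop, fun s' h' hss => (hs.eq_of_le h' hss).symm⟩, hle List.prefix_rfl⟩
  refine ⟨hbase.subset fun s hs => hs.1, ?_, hcov⟩
  obtain ⟨s, hs, _⟩ := hcov (List.replicate k 0) ⟨by simp, fun i => by simp⟩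
  exact ⟨s, hs⟩
end

section
/- Let f ∈ ℱ, k ≥ 1, and η ∈ 𝒯_{f,k}. Then the intersection of all s ∈ 𝒮_{f,k} with η ∈ s meets 𝒯_{f,k} exactly in {η}; equivalently, for every η' ∈ 𝒯_{f,k} with η' ≠ η there exists s ∈ 𝒮_{f,k} with η ∈ s and η' ∉ s. -/
theorem inT_iff (f : ℕ → ℕ) (η : List ℕ) :
    inT f η ↔ ∀ (j a : ℕ), η[j]? = some a → a ≤ f j := by
  constructor
  · intro h j a hj
    obtain ⟨hlt, rfl⟩ := List.getElem?_eq_some_iff.1 hj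
    exact h ⟨j, hlt⟩
  · intro h i
    exact h i _ (by simp)

/-- Sequences in `𝒯_{f,[k]}` avoiding the value `m j` at each place `j`. -/
def sep (f : ℕ → ℕ) (k : ℕ) (m : ℕ → ℕ) : Set (List ℕ) :=
  {σ | σ ∈ Tle f k ∧ ∀ j, σ[j]? ≠ some (m j)}

theorem getElem?_of_prefix {ρ σ : List ℕ} (h : ρ <+: σ) {j a : ℕ}
    (hj : ρ[j]? = some a) : σ[j]? = some a := by
  obtain ⟨t, rfl⟩ := h
  obtain ⟨hlt, rfl⟩ := List.getElem?_eq_some_iff.1 hj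
  simp [List.getElem?_append_left hlt]

theorem Tle_prefix {f : ℕ → ℕ} {k : ℕ} {ρ σ : List ℕ} (h : ρ <+: σ) (hσ : σ ∈ Tle f k) :
    ρ ∈ Tle f k := by
  refine ⟨h.length_le.trans hσ.1, (inT_iff _ _).2 ?_⟩
  intro j a hj
  exact (inT_iff _ _).1 hσ.2 j a (getElem?_of_prefix h hj)

theorem getElem?_snoc {ρ : List ℕ} {c j a : ℕ} (h : (ρ ++ [c])[j]? = some a) :
    ρ[j]? = some a ∨ (j = ρ.length ∧ a = c) := by
  grind

theorem sep_snoc {f : ℕ → ℕ} {k : ℕ} {m : ℕ → ℕ} {ρ : List ℕ} (hρ : ρ ∈ sep f k m)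
    (hlt : ρ.length < k) {c : ℕ} (hc : c ≤ f ρ.length) (hcm : c ≠ m ρ.length) :
    ρ ++ [c] ∈ sep f k m := by
  refine ⟨⟨by simp; omega, (inT_iff _ _).2 ?_⟩, ?_⟩
  · intro j a hj
    rcases getElem?_snoc hj with h | ⟨rfl, rfl⟩
    · exact (inT_iff _ _).1 hρ.1.2 j a h
    · exact hc
  · intro j hj
    rcases getElem?_snoc hj with h | ⟨rfl, h⟩
    · exact hρ.2 j h
    · exact hcm h.symm

theorem sep_mem_Sk (f : ℕ → ℕ) (hf0 : ∀ k, 0 < f k) (k : ℕ) (m : ℕ → ℕ)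
    (hm : ∀ j, m j ≤ f j) : sep f k m ∈ Sk f k := by
  refine ⟨⟨fun σ h => h.1, ⟨[], ⟨by simp, (inT_iff _ _).2 (by simp)⟩, by simp⟩, ?_, ?_, ?_⟩, ?_⟩
  · intro σ hσ ρ hρ
    exact ⟨Tle_prefix hρ hσ.1, fun j hj => hσ.2 j (getElem?_of_prefix hρ hj)⟩
  · intro ρ hρ hmax
    by_contra hne
    have hlt : ρ.length < k := lt_of_le_of_ne hρ.1.1 hne
    obtain ⟨c, hc, hcm⟩ : ∃ c ≤ f ρ.length, c ≠ m ρ.length := by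
      by_cases h : m ρ.length = 0
      · exact ⟨1, hf0 _, by omega⟩
      · exact ⟨0, Nat.zero_le _, by omega⟩
    have := hmax _ (sep_snoc hρ hlt hc hcm) (List.prefix_append _ _)
    simp at this
  · intro ρ _ h
    exact (h _ (hm ρ.length)).2 ρ.length (by simp)
  · intro s' hs' hsub
    obtain ⟨hT, -, hpre, -, hsplit⟩ := hs'
    refine Set.Subset.antisymm ?_ hsub
    intro σ hσ
    refine ⟨hT hσ, ?_⟩
    by_contra hcon
    push Not at hcon
    classical
    have hj := Nat.find_spec hcon
    have hmin := fun i => Nat.find_min hcon (m := i)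
    generalize Nat.find hcon = j at hj hmin
    obtain ⟨hlt, hval⟩ := List.getElem?_eq_some_iff.1 hj
    have hlen : (σ.take j).length = j := by simp; omega
    have hjk : j < k := lt_of_lt_of_le hlt (hT hσ).1
    have hρ : σ.take j ∈ sep f k m := by
      refine ⟨Tle_prefix (List.take_prefix _ _) (hT hσ), ?_⟩
      intro i hi
      obtain ⟨hi', -⟩ := List.getElem?_eq_some_iff.1 hi
      exact hmin i (by omega) (getElem?_of_prefix (List.take_prefix _ _) hi)
    apply hsplit _ hρ.1
    intro l hl
    by_cases hlm : l = m j
    · have : σ.take j ++ [l] = σ.take (j + 1) := by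
        rw [hlm, ← hval]; simp
      rw [this]
      exact hpre σ hσ _ (List.take_prefix _ _)
    · exact hsub (sep_snoc hρ (by omega) hl (by rwa [hlen]))

/-- For `f ∈ ℱ`, `k ≥ 1` and `η ∈ 𝒯_{f,k}`, the intersection of all
`s ∈ 𝒮_{f,k}` containing `η` meets `𝒯_{f,k}` exactly in `{η}`. -/
theorem inter_Sk_eq_singleton
    (f : ℕ → ℕ) (hf : StrictMono f) (hf0 : ∀ k, 0 < f k)
    (k : ℕ) (hk : 1 ≤ k) (η : List ℕ) (hη : η ∈ Tk f k) :
    {η' | η' ∈ Tk f k ∧ ∀ s ∈ Sk f k, η ∈ s → η' ∈ s} = {η} := by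
  classical
  ext η'
  simp only [Set.mem_setOf_eq, Set.mem_singleton_iff]
  constructor
  · rintro ⟨hη', H⟩
    by_contra hne
    obtain ⟨hl, hT⟩ := hη
    obtain ⟨hl', hT'⟩ := hη'
    rw [inT_iff] at hT hT'
    let m : ℕ → ℕ := fun j =>
      if η.getD j 0 ≠ η'.getD j 0 then η'.getD j 0 else if η.getD j 0 = 0 then 1 else 0
    have hm : ∀ j, m j ≤ f j := by
      intro j
      have h1 := hf0 j
      have h2 : η'.getD j 0 ≤ f j := by
        rcases h : η'[j]? with _ | a
        · simp [List.getD, h]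
        · simpa [List.getD, h] using hT' j a h
      simp only [m]
      split_ifs <;> omega
    have hmη : ∀ j, m j ≠ η.getD j 0 := by
      intro j
      simp only [m]
      split_ifs <;> omega
    have hs := sep_mem_Sk f hf0 k m hm
    have hin : η ∈ sep f k m := by
      refine ⟨⟨hl.le, (inT_iff f η).2 hT⟩, ?_⟩
      intro j hj
      apply hmη j
      simp [List.getD, hj]
    have hin' := (H _ hs hin).2
    apply hne
    apply List.ext_getElem (by omega)
    intro j h1 h2
    by_contra hd
    apply hin' j
    have : m j = η'[j] := by
      have h3 : η.getD j 0 = η[j] := by simp [h2]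
      have h4 : η'.getD j 0 = η'[j] := by simp [h1]
      simp only [m, h3, h4]
      rw [if_pos (Ne.symm hd)]
    rw [this]
    simp [h1]
  · rintro rfl
    exact ⟨hη, fun s _ h => h⟩
end

section
/- Let f ∈ ℱ, k ≥ 1, s ∈ 𝒮_{f,k}, and let A ⊆ 𝒯_{f,k+1} be a set such that every ν ∈ A satisfies ν↾k ∈ s, and such that for every ρ ∈ s ∩ 𝒯_{f,k} there is some ℓ ≤ f(k) with ρ⌢⟨ℓ⟩ ∉ A. Then there exists s' ∈ 𝒮_{f,k+1} with s ∪ A ⊆ s'. In particular (taking A = ∅), every s ∈ 𝒮_{f,k} extends to some s' ∈ 𝒮_{f,k+1}. -/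
theorem inT_append_singleton (f : ℕ → ℕ) (ρ : List ℕ) (m : ℕ) :
    inT f (ρ ++ [m]) ↔ inT f ρ ∧ m ≤ f ρ.length := by
  unfold inT
  constructor
  · intro h
    constructor
    · intro i
      have := h ⟨i, by have := i.2; rw [List.length_append]; omega⟩
      simpa [List.getElem_append] using this
    · have := h ⟨ρ.length, by simp⟩
      simpa using this
  · rintro ⟨h, hm⟩ ⟨i, hi⟩
    simp only [List.length_append, List.length_singleton] at hi
    by_cases hlt : i < ρ.length
    · have := h ⟨i, hlt⟩
      simpa [List.getElem_append, hlt] using this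
    · have hi' : i = ρ.length := by omega
      subst hi'
      simpa using hm

theorem sBase_restrict (f : ℕ → ℕ) (k : ℕ) (t : Set (List ℕ)) (ht : SBase f (k + 1) t) :
    SBase f k {η | η ∈ t ∧ η.length ≤ k} := by
  obtain ⟨h1, ⟨x, hx⟩, h3, h4, h5⟩ := ht
  refine ⟨?_, ?_, ?_, ?_, ?_⟩
  · rintro η ⟨hη, hl⟩
    exact ⟨hl, (h1 hη).2⟩
  · exact ⟨[], h3 x hx [] List.nil_prefix, by simp⟩
  · rintro η ⟨hη, hl⟩ ρ hρ
    exact ⟨h3 η hη ρ hρ, hρ.length_le.trans hl⟩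
  · rintro ρ ⟨hρ, hl⟩ hmax
    by_contra hne
    have hlt : ρ.length < k := by omega
    have : ρ.length = k + 1 := by
      refine h4 ρ hρ ?_
      intro η hη hpre
      by_contra hηρ
      have hlen : ρ.length < η.length := by
        rcases Nat.lt_or_ge ρ.length η.length with h | h
        · exact h
        · exact absurd (hpre.eq_of_length_le h).symm hηρ
      have hp : ρ <+: η.take (ρ.length + 1) := by
        rw [List.prefix_take_iff]
        exact ⟨hpre, by omega⟩
      have := hmax (η.take (ρ.length + 1))
        ⟨h3 η hη _ (List.take_prefix _ _), by simp; omega⟩ hp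
      have := congrArg List.length this
      simp at this
      omega
    omega
  · rintro ρ ⟨hρ, hT⟩ hall
    exact h5 ρ ⟨by omega, hT⟩ fun l hl => (hall l hl).1

/-- For `f ∈ ℱ`, `k ≥ 1`, `s ∈ 𝒮_{f,k}` and `A ⊆ 𝒯_{f,k+1}` such that every
`ν ∈ A` restricts into `s` and no node of `s ∩ 𝒯_{f,k}` has all its immediate
successors in `A`, there is `s' ∈ 𝒮_{f,k+1}` with `s ∪ A ⊆ s'`. -/
theorem extend_to_Sk_succ
    (f : ℕ → ℕ) (hf : StrictMono f) (hf0 : ∀ k, 0 < f k)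
    (k : ℕ) (hk : 1 ≤ k) (s : Set (List ℕ)) (hs : s ∈ Sk f k)
    (A : Set (List ℕ)) (hA : A ⊆ Tk f (k + 1))
    (hAs : ∀ ν ∈ A, ν.take k ∈ s)
    (hAfree : ∀ ρ ∈ s ∩ Tk f k, ∃ ℓ ≤ f k, ρ ++ [ℓ] ∉ A) :
    ∃ s' ∈ Sk f (k + 1), s ∪ A ⊆ s' := by
  classical
  obtain ⟨hb, hmax⟩ := hs
  obtain ⟨h1, h2, h3, h4, h5⟩ := hb
  choose! c hc hcA using hAfree
  let s' : Set (List ℕ) :=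
    s ∪ {η | ∃ ρ m, ρ ∈ s ∧ ρ.length = k ∧ m ≤ f k ∧ m ≠ c ρ ∧ η = ρ ++ [m]}
  have hTk : ∀ ρ ∈ s, ρ.length = k → ρ ∈ s ∩ Tk f k :=
    fun ρ hρ hl => ⟨hρ, hl, (h1 hρ).2⟩
  have hsT : s' ⊆ Tle f (k + 1) := by
    rintro η (hη | ⟨ρ, m, hρ, hl, hm, -, rfl⟩)
    · exact ⟨(h1 hη).1.trans (by omega), (h1 hη).2⟩
    · exact ⟨by simp [hl], (inT_append_singleton f ρ m).2 ⟨(h1 hρ).2, hl ▸ hm⟩⟩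
  have hbase : SBase f (k + 1) s' := by
    refine ⟨hsT, h2.mono Set.subset_union_left, ?_, ?_, ?_⟩
    · rintro η (hη | ⟨ρ, m, hρ, hl, hm, hmc, rfl⟩) τ hτ
      · exact Or.inl (h3 η hη τ hτ)
      · rcases List.prefix_concat_iff.1 hτ with h | h
        · exact Or.inr ⟨ρ, m, hρ, hl, hm, hmc, by simpa using h⟩
        · exact Or.inl (h3 ρ hρ τ h)
    · rintro η (hη | ⟨ρ, m, hρ, hl, hm, hmc, rfl⟩) hmx
      · exfalso
        have hl : η.length = k := h4 η hη fun τ hτ => hmx τ (Or.inl hτ)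
        obtain ⟨m, hm, hmc⟩ : ∃ m, m ≤ f k ∧ m ≠ c η := by
          by_cases h0 : c η = 0
          · exact ⟨1, hf0 k, by omega⟩
          · exact ⟨0, Nat.zero_le _, fun h => h0 h.symm⟩
        have := hmx (η ++ [m]) (Or.inr ⟨η, m, hη, hl, hm, hmc, rfl⟩) (List.prefix_append _ _)
        simp at this
      · simp [hl]
    · rintro ρ ⟨hρl, hρT⟩ hall
      rcases Nat.lt_trichotomy ρ.length k with hlt | heq | hgt
      · refine h5 ρ ⟨hlt.le, hρT⟩ fun l hl => ?_
        rcases hall l hl with h | ⟨τ, m, -, hτ, -, -, he⟩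
        · exact h
        · have := congrArg List.length he
          simp at this
          omega
      · have key : ∀ l ≤ f k, ρ ∈ s ∧ l ≠ c ρ := by
          intro l hl
          rcases hall l (by rw [heq]; exact hl) with h | ⟨τ, m, hτs, hτ, -, hmc, he⟩
          · have := (h1 h).1
            simp at this
            omega
          · obtain ⟨e1, e2⟩ := List.append_inj' he rfl
            simp only [List.cons.injEq, and_true] at e2
            subst e1 e2
            exact ⟨hτs, hmc⟩
        have hρs := (key 0 (Nat.zero_le _)).1
        exact (key (c ρ) (hc ρ (hTk ρ hρs heq))).2 rfl
      · have := (hsT (hall 0 (Nat.zero_le _))).1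
        simp at this
        omega
  refine ⟨s', ⟨hbase, ?_⟩, ?_⟩
  · intro t ht hst
    have hr := hmax _ (sBase_restrict f k t ht)
      (fun η hη => ⟨hst (Or.inl hη), (h1 hη).1⟩)
    refine Set.Subset.antisymm ?_ hst
    intro η hη
    by_cases hl : η.length ≤ k
    · left
      rw [← hr]
      exact ⟨hη, hl⟩
    · have hT := ht.1 hη
      have hlen : η.length = k + 1 := by have := hT.1; omega
      rcases List.eq_nil_or_concat η with h | ⟨ρ, m, h⟩
      · subst h
        simp at hlen
      · subst h
        simp only [List.concat_eq_append, List.length_append, List.length_singleton,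
          Nat.add_right_cancel_iff] at *
        have hρs : ρ ∈ s := by
          rw [← hr]
          exact ⟨ht.2.2.1 _ hη ρ (List.prefix_append _ _), hlen.le⟩
        have hTT := (inT_append_singleton f ρ m).1 hT.2
        refine Or.inr ⟨ρ, m, hρs, hlen, hlen ▸ hTT.2, ?_, rfl⟩
        intro hmc
        refine ht.2.2.2.2 ρ ⟨by omega, hTT.1⟩ fun l hl => ?_
        by_cases hlc : l = c ρ
        · rw [hlc, ← hmc]
          exact hη
        · exact hst (Or.inr ⟨ρ, l, hρs, hlen, hlen ▸ hl, hlc, rfl⟩)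
  · rintro η (hη | hη)
    · exact Or.inl hη
    · have hT := hA hη
      have hlen := hT.1
      have hts := hAs η hη
      rcases List.eq_nil_or_concat η with h | ⟨ρ, m, h⟩
      · subst h
        simp at hlen
      · rw [List.concat_eq_append] at h
        subst h
        have hl : ρ.length = k := by simpa using hlen
        have hρs : ρ ∈ s := by
          rw [← hl] at hts
          simpa using hts
        have hTT := (inT_append_singleton f ρ m).1 hT.2
        refine Or.inr ⟨ρ, m, hρs, hl, hl ▸ hTT.2, ?_, rfl⟩
        intro hmc
        apply hcA ρ (hTk ρ hρs hl)
        rw [← hmc]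
        exact hη
end

section
/- Let f ∈ ℱ. For every k ≥ 1 and every s ∈ 𝒮_{f,k} there exists a sequence ⟨s_j : 1 ≤ j < ω⟩ ∈ lim(𝒮_f) with s_k = s; in particular lim(𝒮_f) is nonempty. -/
theorem inT_append_single (f : ℕ → ℕ) (ρ : List ℕ) (l : ℕ) :
    inT f (ρ ++ [l]) ↔ inT f ρ ∧ l ≤ f ρ.length := by
  constructor
  · intro h
    constructor
    · intro i
      have := h ⟨i, by have := i.2; simp only [List.length_append, List.length_singleton]; omega⟩
      simpa [List.getElem_append] using this
    · have := h ⟨ρ.length, by simp⟩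
      simpa using this
  · rintro ⟨h1, h2⟩ ⟨i, hi⟩
    simp at hi
    by_cases hlt : i < ρ.length
    · have := h1 ⟨i, hlt⟩
      simpa [List.getElem_append, hlt] using this
    · have he : i = ρ.length := by omega
      subst he
      simpa using h2

theorem inT_prefix (f : ℕ → ℕ) (η ρ : List ℕ) (h : inT f η) (hp : ρ <+: η) : inT f ρ := by
  obtain ⟨t, rfl⟩ := hp
  induction t using List.reverseRecOn with
  | nil => simpa using h
  | append_singleton t a ih =>
    rw [← List.append_assoc, inT_append_single] at h
    exact ih h.1

/-- The tree avoiding, above each node `ρ`, the successor `m ρ`, up to height `k`. -/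
def avoidTree (f : ℕ → ℕ) (m : List ℕ → ℕ) (k : ℕ) : Set (List ℕ) :=
  {η | (η.length ≤ k ∧ inT f η) ∧ ∀ (ρ : List ℕ) (l : ℕ), ρ ++ [l] <+: η → l ≠ m ρ}

theorem avoidTree_append (f : ℕ → ℕ) (m : List ℕ → ℕ) (k : ℕ) (ρ : List ℕ) (l : ℕ)
    (h : ρ ∈ avoidTree f m k) (hk : ρ.length < k) (hl : l ≤ f ρ.length) (hm : l ≠ m ρ) :
    ρ ++ [l] ∈ avoidTree f m k := by
  refine ⟨⟨by simp; omega, (inT_append_single f ρ l).2 ⟨h.1.2, hl⟩⟩, ?_⟩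
  intro σ l' hp
  rcases List.prefix_concat_iff.1 hp with he | hp'
  · obtain ⟨rfl, h2⟩ := List.append_inj' he rfl
    simp at h2
    rw [h2]
    exact hm
  · exact h.2 σ l' hp'

theorem avoidTree_SBase (f : ℕ → ℕ) (hf0 : ∀ k, 0 < f k) (m : List ℕ → ℕ)
    (hm : ∀ ρ, m ρ ≤ f ρ.length) (k : ℕ) : SBase f k (avoidTree f m k) := by
  refine ⟨fun η h => h.1, ⟨[], ⟨by simp, fun i => i.elim0⟩, by simp⟩, ?_, ?_, ?_⟩
  · intro η h ρ hp
    exact ⟨⟨hp.length_le.trans h.1.1, inT_prefix f η ρ h.1.2 hp⟩,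
      fun σ l hσ => h.2 σ l (hσ.trans hp)⟩
  · intro ρ h hmax
    by_contra hne
    have hlt : ρ.length < k := lt_of_le_of_ne h.1.1 hne
    have hpos := hf0 ρ.length
    obtain ⟨l, hl, hlm⟩ : ∃ l, l ≤ f ρ.length ∧ l ≠ m ρ := by
      by_cases h0 : m ρ = 0
      · exact ⟨1, hpos, by omega⟩
      · exact ⟨0, by omega, by omega⟩
    have := hmax _ (avoidTree_append f m k ρ l h hlt hl hlm) (List.prefix_append _ _)
    simp at this
  · intro ρ _ hall
    exact (hall (m ρ) (hm ρ)).2 ρ (m ρ) (List.prefix_refl _) rfl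

theorem avoidTree_Sk (f : ℕ → ℕ) (hf0 : ∀ k, 0 < f k) (m : List ℕ → ℕ)
    (hm : ∀ ρ, m ρ ≤ f ρ.length) (k : ℕ) : avoidTree f m k ∈ Sk f k := by
  refine ⟨avoidTree_SBase f hf0 m hm k, ?_⟩
  intro s hs hsub
  refine Set.Subset.antisymm ?_ hsub
  intro η
  induction η using List.reverseRecOn with
  | nil => exact fun _ => ⟨⟨by simp, fun i => i.elim0⟩, by simp⟩
  | append_singleton ρ l ih =>
    intro h
    have hρ := ih (hs.2.2.1 _ h ρ (List.prefix_append _ _))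
    have hT := hs.1 h
    have hlen : ρ.length < k := by
      have := hT.1
      simp at this
      omega
    refine avoidTree_append f m k ρ l hρ hlen ((inT_append_single f ρ l).1 hT.2).2 ?_
    intro he
    apply hs.2.2.2.2 ρ hρ.1
    intro l' hl'
    by_cases h' : l' = m ρ
    · rw [h', ← he]
      exact h
    · exact hsub (avoidTree_append f m k ρ l' hρ hlen hl' h')

theorem Sk_eq_avoidTree (f : ℕ → ℕ) (hf0 : ∀ k, 0 < f k) (k : ℕ) (s : Set (List ℕ))
    (hs : s ∈ Sk f k) :
    ∃ m : List ℕ → ℕ, (∀ ρ, m ρ ≤ f ρ.length) ∧ avoidTree f m k = s := by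
  have hex : ∀ ρ : List ℕ, ∃ l, l ≤ f ρ.length ∧ (ρ ∈ Tle f k → ρ ++ [l] ∉ s) := by
    intro ρ
    by_cases h : ρ ∈ Tle f k
    · have := hs.1.2.2.2.2 ρ h
      push Not at this
      obtain ⟨l, h1, h2⟩ := this
      exact ⟨l, h1, fun _ => h2⟩
    · exact ⟨0, Nat.zero_le _, fun h' => absurd h' h⟩
  choose m hm hm2 using hex
  refine ⟨m, hm, hs.2 _ (avoidTree_SBase f hf0 m hm k) ?_⟩
  intro η hη
  refine ⟨hs.1.1 hη, ?_⟩
  intro ρ l hp he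
  have h1 := hs.1.2.2.1 η hη _ hp
  have h2 := hs.1.2.2.1 _ h1 ρ (List.prefix_append _ _)
  rw [he] at h1
  exact hm2 ρ (hs.1.1 h2) h1

theorem avoidTree_limS (f : ℕ → ℕ) (hf0 : ∀ k, 0 < f k) (m : List ℕ → ℕ)
    (hm : ∀ ρ, m ρ ≤ f ρ.length) : avoidTree f m ∈ limS f :=
  ⟨fun k _ => avoidTree_Sk f hf0 m hm k,
    fun _ _ _ hlt _ h => ⟨⟨h.1.1.trans hlt.le, h.1.2⟩, h.2⟩⟩

/-- For `f ∈ ℱ`, every `s ∈ 𝒮_{f,k}` (`k ≥ 1`) occurs as the `k`-th entry of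
some branch of `𝒮_f`; in particular `lim(𝒮_f)` is nonempty. -/
theorem limS_through_any
    (f : ℕ → ℕ) (hf : StrictMono f) (hf0 : ∀ k, 0 < f k) :
    (∀ k, 1 ≤ k → ∀ s ∈ Sk f k, ∃ ν ∈ limS f, ν k = s) ∧
      (limS f).Nonempty := by
  refine ⟨?_, ⟨avoidTree f (fun _ => 0), avoidTree_limS f hf0 _ (fun _ => Nat.zero_le _)⟩⟩
  intro k _ s hs
  obtain ⟨m, hm, he⟩ := Sk_eq_avoidTree f hf0 k s hs
  exact ⟨avoidTree f m, avoidTree_limS f hf0 m hm, he⟩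
end

section
/- Let f ∈ ℱ. (i) For every ⟨s_k : 1 ≤ k < ω⟩ ∈ lim(𝒮_f) there exists η ∈ lim(𝒯_f) such that η↾k ∈ s_k for all k ≥ 1. (ii) Conversely, for every η ∈ lim(𝒯_f) there exists ⟨s_k : 1 ≤ k < ω⟩ ∈ lim(𝒮_f) such that η↾k ∈ s_k for all k ≥ 1. -/
theorem inT_iff_aux (f : ℕ → ℕ) (η : List ℕ) :
    inT f η ↔ ∀ i (h : i < η.length), η[i] ≤ f i := by
  constructor
  · intro h i hi
    exact h ⟨i, hi⟩
  · intro h i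
    exact h i.1 i.2

theorem restr_succ_aux (η : ℕ → ℕ) (k : ℕ) : restr η (k+1) = restr η k ++ [η k] := by
  simp [restr, List.range_succ]

/-- sequences of length at most `k` avoiding `g`. -/
def avoidSet (f g : ℕ → ℕ) (k : ℕ) : Set (List ℕ) :=
  {ρ | ρ.length ≤ k ∧ ∀ i (h : i < ρ.length), ρ[i] ≤ f i ∧ ρ[i] ≠ g i}

theorem avoidSet_append (f g : ℕ → ℕ) (k : ℕ) (ρ : List ℕ) (a : ℕ) :
    ρ ++ [a] ∈ avoidSet f g k ↔
      ρ ∈ avoidSet f g k ∧ ρ.length < k ∧ a ≤ f ρ.length ∧ a ≠ g ρ.length := by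
  constructor
  · rintro ⟨h1, h2⟩
    have h1' : ρ.length < k := by simp at h1; omega
    have h3 := h2 ρ.length (by simp)
    refine ⟨⟨h1'.le, fun i hi => ?_⟩, h1', by simpa using h3⟩
    have := h2 i (by simp; omega)
    rwa [List.getElem_append_left hi] at this
  · rintro ⟨⟨_, h2⟩, h3, h4, h5⟩
    refine ⟨by simp; omega, fun i hi => ?_⟩
    by_cases h : i < ρ.length
    · rw [List.getElem_append_left h]
      exact h2 i h
    · have : i = ρ.length := by simp at hi; omega
      subst this
      simpa using ⟨h4, h5⟩

theorem avoidSet_mem_Sk (f g η : ℕ → ℕ) (hg : ∀ i, g i ≤ f i) (hη : ∀ i, η i ≤ f i)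
    (hne : ∀ i, η i ≠ g i) (k : ℕ) : avoidSet f g k ∈ Sk f k := by
  refine ⟨⟨?_, ⟨[], by simp [avoidSet]⟩, ?_, ?_, ?_⟩, ?_⟩
  · rintro ρ ⟨h1, h2⟩
    exact ⟨h1, (inT_iff_aux _ _).2 fun i hi => (h2 i hi).1⟩
  · rintro σ ⟨h1, h2⟩ ρ hρ
    refine ⟨hρ.length_le.trans h1, fun i hi => ?_⟩
    have := h2 i (hi.trans_le hρ.length_le)
    rwa [← hρ.getElem hi] at this
  · intro ρ hρ hmax
    by_contra hk
    have h1 := hρ.1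
    have := hmax (ρ ++ [η ρ.length])
      ((avoidSet_append ..).2 ⟨hρ, by omega, hη _, hne _⟩) (List.prefix_append _ _)
    simp at this
  · intro ρ _ hall
    exact ((avoidSet_append ..).1 (hall _ (hg _))).2.2.2 rfl
  · rintro s' ⟨hs1, _, hs3, _, hs5⟩ hsub
    refine Set.Subset.antisymm ?_ hsub
    intro ρ
    induction ρ using List.reverseRecOn with
    | nil => intro _; simp [avoidSet]
    | append_singleton ρ a ih =>
      intro hmem
      have hρ' := hs3 _ hmem ρ (List.prefix_append _ _)
      have hρ := ih hρ'
      obtain ⟨hl, hT⟩ := hs1 hmem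
      have hl' : ρ.length < k := by simp at hl; omega
      have ha : a ≤ f ρ.length := by
        have := (inT_iff_aux _ _).1 hT ρ.length (by simp)
        simpa using this
      refine (avoidSet_append ..).2 ⟨hρ, hl', ha, ?_⟩
      intro hag
      refine hs5 ρ (hs1 hρ') fun l hlf => ?_
      by_cases h : l = g ρ.length
      · rw [h, ← hag]
        exact hmem
      · exact hsub ((avoidSet_append ..).2 ⟨hρ, hl', hlf, h⟩)

/-- For `f ∈ ℱ`: (i) every branch `⟨s_k : 1 ≤ k < ω⟩ ∈ lim(𝒮_f)` admits a
branch `η ∈ lim(𝒯_f)` with `η↾k ∈ s_k` for all `k ≥ 1`; (ii) conversely every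
`η ∈ lim(𝒯_f)` admits a branch of `𝒮_f` with `η↾k ∈ s_k` for all `k ≥ 1`. -/
theorem limS_limT_correspondence
    (f : ℕ → ℕ) (hf : StrictMono f) (hf0 : ∀ k, 0 < f k) :
    (∀ ν ∈ limS f, ∃ η ∈ limT f, ∀ k, 1 ≤ k → restr η k ∈ ν k) ∧
    (∀ η ∈ limT f, ∃ ν ∈ limS f, ∀ k, 1 ≤ k → restr η k ∈ ν k) := by
  constructor
  · rintro ν ⟨hS, hmono⟩
    have step : ∀ ρ : List ℕ, ∃ l, ρ ∈ ν (ρ.length + 1) → ρ ++ [l] ∈ ν (ρ.length + 1) := by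
      intro ρ
      by_cases hρ : ρ ∈ ν (ρ.length + 1)
      · obtain ⟨⟨_, _, h3, h4, _⟩, _⟩ := hS (ρ.length + 1) (by omega)
        have : ¬ ∀ σ ∈ ν (ρ.length + 1), ρ <+: σ → σ = ρ := by
          intro h
          have := h4 ρ hρ h
          omega
        push Not at this
        obtain ⟨σ, hσ, ⟨t, rfl⟩, hne⟩ := this
        cases t with
        | nil => simp at hne
        | cons a t => exact ⟨a, fun _ => h3 _ hσ _ ⟨t, by simp⟩⟩
      · exact ⟨0, fun h => absurd h hρ⟩
    choose g hg using step
    let q : ℕ → List ℕ := fun n => Nat.rec [] (fun _ r => r ++ [g r]) n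
    have hq : ∀ n, q (n+1) = q n ++ [g (q n)] := fun _ => rfl
    have hr : ∀ k, restr (fun n => g (q n)) k = q k := by
      intro k
      induction k with
      | zero => rfl
      | succ k ih => rw [restr_succ_aux, ih, hq]
    have hlen : ∀ k, (q k).length = k := by
      intro k
      rw [← hr]
      simp [restr]
    have hmem : ∀ k, q k ∈ ν (k+1) := by
      intro k
      induction k with
      | zero =>
        obtain ⟨⟨_, ⟨σ, hσ⟩, h3, _⟩, _⟩ := hS 1 le_rfl
        exact h3 σ hσ [] List.nil_prefix
      | succ k ih =>
        have := hg (q k)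
        rw [hlen] at this
        exact hmono (k+1) (k+2) (by omega) (by omega) (this ih)
    refine ⟨fun n => g (q n), fun k => ?_, fun k hk => ?_⟩
    · rw [hr]
      exact ⟨hlen k, ((hS (k+1) (by omega)).1.1 (hmem k)).2⟩
    · rw [hr]
      obtain ⟨j, rfl⟩ : ∃ j, k = j + 1 := ⟨k - 1, by omega⟩
      have := hg (q j)
      rw [hlen] at this
      exact this (hmem j)
  · intro η hη
    have hle : ∀ i, η i ≤ f i := by
      intro i
      have := (inT_iff_aux _ _).1 (hη (i+1)).2 i (by simp [restr])
      simpa [restr] using this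
    let g : ℕ → ℕ := fun i => if η i = 0 then 1 else 0
    have hgf : ∀ i, g i ≤ f i := by
      intro i
      have := hf0 i
      dsimp only [g]
      split <;> omega
    have hne : ∀ i, η i ≠ g i := by
      intro i
      dsimp only [g]
      split <;> omega
    refine ⟨avoidSet f g, ⟨fun k _ => avoidSet_mem_Sk f g η hgf hle hne k, ?_⟩, ?_⟩
    · rintro k k' _ hk ρ ⟨h1, h2⟩
      exact ⟨h1.trans hk.le, h2⟩
    · intro k _
      refine ⟨by simp [restr], fun i hi => ?_⟩
      simpa [restr] using ⟨hle i, hne i⟩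
end

section
/- Let f ∈ ℱ. The class of models of T_{0,f} has the amalgamation property: whenever A, M, N are models of T_{0,f} and g : A → M, h : A → N are embeddings of τ-structures, there is a model P of T_{0,f} and embeddings g' : M → P, h' : N → P with g' ∘ g = h' ∘ h. (The amalgam may be taken to be the free amalgam: the union of M and N over the common copy of A, with no R-edges between M ∖ g(A) and N ∖ h(A).) -/
universe u

/-- An interpretation of the vocabulary
`τ = {P, Q, R, P_η (η ∈ 𝒯_f), Q_s (s ∈ 𝒮_f)}` on a domain `M`.
(The values of `Pn`/`Qs` off `𝒯_f`/`𝒮_f` are irrelevant.) -/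
structure T0Str (M : Type u) where
  P : Set M
  Q : Set M
  Pn : List ℕ → Set M
  Qs : Set (List ℕ) → Set M
  R : M → M → Prop

/-- `S` is a model of the universal theory `T_{0,f}` (Definition 2.3). -/
def IsModelT0 (f : ℕ → ℕ) {M : Type u} (S : T0Str M) : Prop :=
  -- (a) P, Q partition M
  (S.P ∪ S.Q = Set.univ ∧ Disjoint S.P S.Q) ∧
  -- (b) for each k, ⟨P_η : η ∈ 𝒯_{f,k}⟩ partitions P
  (∀ k, (⋃ η ∈ Tk f k, S.Pn η) = S.P ∧
    ∀ η ∈ Tk f k, ∀ η' ∈ Tk f k, η ≠ η' → Disjoint (S.Pn η) (S.Pn η')) ∧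
  -- (c) for each k ≥ 1, ⟨Q_s : s ∈ 𝒮_{f,k}⟩ partitions Q
  (∀ k, 1 ≤ k → (⋃ s ∈ Sk f k, S.Qs s) = S.Q ∧
    ∀ s ∈ Sk f k, ∀ s' ∈ Sk f k, s ≠ s' → Disjoint (S.Qs s) (S.Qs s')) ∧
  -- (d) monotonicity
  (∀ η ∈ Tf f, ∀ η' ∈ Tf f, η <+: η' → S.Pn η' ⊆ S.Pn η) ∧
  (∀ s ∈ Sf f, ∀ s' ∈ Sf f, s ⊆ s' → S.Qs s' ⊆ S.Qs s) ∧
  -- (e) R ⊆ Q × P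
  (∀ b a, S.R b a → b ∈ S.Q ∧ a ∈ S.P) ∧
  -- (e) no element of Q connects into every piece of a successor partition
  (∀ k, ∀ η ∈ Tk f k, ∀ bv : ℕ → M,
    (∀ ℓ ≤ f k, bv ℓ ∈ S.Pn (η ++ [ℓ])) →
      ¬ ∃ x ∈ S.Q, ∀ ℓ ≤ f k, S.R x (bv ℓ)) ∧
  -- (e) edges from Q_s go only into P_η with η ∈ s
  (∀ b a, S.R b a → ∀ k, 1 ≤ k → ∀ s ∈ Sk f k, b ∈ S.Qs s →
    ∀ η ∈ Tk f k, a ∈ S.Pn η → η ∈ s)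

/-- An embedding of `τ`-structures: injective and preserving all atomic
formulas in both directions. -/
def IsEmb (f : ℕ → ℕ) {A B : Type u} (SA : T0Str A) (SB : T0Str B)
    (g : A → B) : Prop :=
  Function.Injective g ∧
  (∀ a, a ∈ SA.P ↔ g a ∈ SB.P) ∧
  (∀ a, a ∈ SA.Q ↔ g a ∈ SB.Q) ∧
  (∀ η ∈ Tf f, ∀ a, a ∈ SA.Pn η ↔ g a ∈ SB.Pn η) ∧
  (∀ s ∈ Sf f, ∀ a, a ∈ SA.Qs s ↔ g a ∈ SB.Qs s) ∧
  (∀ a b, SA.R a b ↔ SB.R (g a) (g b))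


/-- A set amalgam: jointly surjective, injective maps meeting only over `A`. -/
theorem exists_set_amalgam {A M N : Type u} (g : A → M) (h : A → N)
    (hg : Function.Injective g) (hh : Function.Injective h) :
    ∃ (P : Type u) (g' : M → P) (h' : N → P), Function.Injective g' ∧ Function.Injective h' ∧
      (∀ a, g' (g a) = h' (h a)) ∧ (∀ m n, g' m = h' n → ∃ a, m = g a ∧ n = h a) ∧
      (∀ x, (∃ m, x = g' m) ∨ ∃ n, x = h' n) := by
  classical
  refine ⟨M ⊕ {n : N // ¬ ∃ a, h a = n}, Sum.inl,
    fun n => if hn : ∃ a, h a = n then Sum.inl (g hn.choose) else Sum.inr ⟨n, hn⟩,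
    Sum.inl_injective, ?_, ?_, ?_, ?_⟩
  · intro n n' e
    by_cases h1 : ∃ a, h a = n <;> by_cases h2 : ∃ a, h a = n' <;> simp only [h1, h2, dite_true, dite_false] at e
    · have e2 := hg (Sum.inl_injective e)
      rw [← h1.choose_spec, e2, h2.choose_spec]
    · cases e
    · cases e
    · simpa using e
  · intro a
    have h1 : ∃ b, h b = h a := ⟨a, rfl⟩
    simp only [h1, dite_true]
    rw [hh h1.choose_spec]
  · intro m n e
    by_cases h1 : ∃ a, h a = n <;> simp only [h1, dite_true, dite_false] at e
    · exact ⟨h1.choose, Sum.inl_injective e, h1.choose_spec.symm⟩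
    · cases e
  · rintro (m | ⟨n, hn⟩)
    · exact Or.inl ⟨m, rfl⟩
    · exact Or.inr ⟨n, by simp only [hn, dite_false]⟩

theorem mem_glue {A M N P : Type u} {g : A → M} {h : A → N} {g' : M → P} {h' : N → P}
    (ig : Function.Injective g') (ih : Function.Injective h')
    (hmeet : ∀ m n, g' m = h' n → ∃ a, m = g a ∧ n = h a)
    {XA : Set A} {XM : Set M} {XN : Set N}
    (h1 : ∀ a, a ∈ XA ↔ g a ∈ XM) (h2 : ∀ a, a ∈ XA ↔ h a ∈ XN) :
    (∀ m, m ∈ XM ↔ g' m ∈ g' '' XM ∪ h' '' XN) ∧ (∀ n, n ∈ XN ↔ h' n ∈ g' '' XM ∪ h' '' XN) := by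
  refine ⟨fun m => ⟨fun hm => Or.inl ⟨m, hm, rfl⟩, ?_⟩, fun n => ⟨fun hn => Or.inr ⟨n, hn, rfl⟩, ?_⟩⟩
  · rintro (⟨m', hm, e⟩ | ⟨n, hn, e⟩)
    · exact ig e ▸ hm
    · obtain ⟨a, rfl, rfl⟩ := hmeet m n e.symm
      exact (h1 a).1 ((h2 a).2 hn)
  · rintro (⟨m, hm, e⟩ | ⟨n', hn, e⟩)
    · obtain ⟨a, rfl, rfl⟩ := hmeet m n e
      exact (h2 a).1 ((h1 a).2 hm)
    · exact ih e ▸ hn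

theorem inT_append {f : ℕ → ℕ} {η : List ℕ} (hη : inT f η) {l : ℕ} (hl : l ≤ f η.length) :
    inT f (η ++ [l]) := by
  rintro ⟨i, hi⟩
  simp only [List.get_eq_getElem]
  by_cases h : i < η.length
  · rw [List.getElem_append_left h]
    exact hη ⟨i, h⟩
  · have : i = η.length := by simp at hi; omega
    subst this
    simpa using hl

/-- **Part of Claim 2.5.** The class of models of `T_{0,f}` has the
amalgamation property: embeddings `g : A → M`, `h : A → N` of models of
`T_{0,f}` can be completed to embeddings `g' : M → P`, `h' : N → P` into a
model `P` of `T_{0,f}` with `g' ∘ g = h' ∘ h`. -/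
theorem amalgamation
    (f : ℕ → ℕ) (hf : StrictMono f) (hf0 : ∀ k, 0 < f k)
    (A M N : Type u) (SA : T0Str A) (SM : T0Str M) (SN : T0Str N)
    (hA : IsModelT0 f SA) (hM : IsModelT0 f SM) (hN : IsModelT0 f SN)
    (g : A → M) (h : A → N)
    (hg : IsEmb f SA SM g) (hh : IsEmb f SA SN h) :
    ∃ (P : Type u) (SP : T0Str P), IsModelT0 f SP ∧
      ∃ (g' : M → P) (h' : N → P),
        IsEmb f SM SP g' ∧ IsEmb f SN SP h' ∧ g' ∘ g = h' ∘ h := by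
  obtain ⟨P, g', h', ig, ih, hcomm, hmeet, hsurj⟩ := exists_set_amalgam g h hg.1 hh.1
  obtain ⟨hgi, hgP, hgQ, hgPn, hgQs, hgR⟩ := hg
  obtain ⟨hhi, hhP, hhQ, hhPn, hhQs, hhR⟩ := hh
  obtain ⟨⟨Ma, Ma'⟩, Mb, Mc, Md, Md', Me, -, Me'⟩ := hM
  obtain ⟨⟨Na, Na'⟩, Nb, Nc, Nd, Nd', Ne, -, Ne'⟩ := hN
  let SP : T0Str P :=
    { P := g' '' SM.P ∪ h' '' SN.P
      Q := g' '' SM.Q ∪ h' '' SN.Q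
      Pn := fun η => g' '' SM.Pn η ∪ h' '' SN.Pn η
      Qs := fun s => g' '' SM.Qs s ∪ h' '' SN.Qs s
      R := fun b a => (∃ y x, b = g' y ∧ a = g' x ∧ SM.R y x) ∨
        (∃ y x, b = h' y ∧ a = h' x ∧ SN.R y x) }
  obtain ⟨PM, PN⟩ : (∀ m, m ∈ SM.P ↔ g' m ∈ SP.P) ∧ (∀ n, n ∈ SN.P ↔ h' n ∈ SP.P) :=
    mem_glue ig ih hmeet hgP hhP
  obtain ⟨QM, QN⟩ : (∀ m, m ∈ SM.Q ↔ g' m ∈ SP.Q) ∧ (∀ n, n ∈ SN.Q ↔ h' n ∈ SP.Q) :=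
    mem_glue ig ih hmeet hgQ hhQ
  have hPn : ∀ η ∈ Tf f, (∀ m, m ∈ SM.Pn η ↔ g' m ∈ SP.Pn η) ∧
      (∀ n, n ∈ SN.Pn η ↔ h' n ∈ SP.Pn η) := fun η hη =>
    mem_glue ig ih hmeet (hgPn η hη) (hhPn η hη)
  have hQs : ∀ s ∈ Sf f, (∀ m, m ∈ SM.Qs s ↔ g' m ∈ SP.Qs s) ∧
      (∀ n, n ∈ SN.Qs s ↔ h' n ∈ SP.Qs s) := fun s hs =>
    mem_glue ig ih hmeet (hgQs s hs) (hhQs s hs)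
  have PnM := fun η hη => (hPn η hη).1
  have PnN := fun η hη => (hPn η hη).2
  have QsM := fun s hs => (hQs s hs).1
  have QsN := fun s hs => (hQs s hs).2
  have RM : ∀ a b, SM.R a b ↔ SP.R (g' a) (g' b) := by
    intro a b
    refine ⟨fun hr => Or.inl ⟨a, b, rfl, rfl, hr⟩, ?_⟩
    rintro (⟨y, x, e1, e2, hr⟩ | ⟨y, x, e1, e2, hr⟩)
    · rw [ig e1, ig e2]; exact hr
    · obtain ⟨c, rfl, rfl⟩ := hmeet _ _ e1
      obtain ⟨d, rfl, rfl⟩ := hmeet _ _ e2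
      exact (hgR c d).1 ((hhR c d).2 hr)
  have RN : ∀ a b, SN.R a b ↔ SP.R (h' a) (h' b) := by
    intro a b
    refine ⟨fun hr => Or.inr ⟨a, b, rfl, rfl, hr⟩, ?_⟩
    rintro (⟨y, x, e1, e2, hr⟩ | ⟨y, x, e1, e2, hr⟩)
    · obtain ⟨c, rfl, rfl⟩ := hmeet _ _ e1.symm
      obtain ⟨d, rfl, rfl⟩ := hmeet _ _ e2.symm
      exact (hhR c d).1 ((hgR c d).2 hr)
    · rw [ih e1, ih e2]; exact hr
  have hRQP : ∀ b a, SP.R b a → b ∈ SP.Q ∧ a ∈ SP.P := by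
    rintro b a (⟨y, x, rfl, rfl, hr⟩ | ⟨y, x, rfl, rfl, hr⟩)
    · exact ⟨(QM y).1 (Me _ _ hr).1, (PM x).1 (Me _ _ hr).2⟩
    · exact ⟨(QN y).1 (Ne _ _ hr).1, (PN x).1 (Ne _ _ hr).2⟩
  have hedge : ∀ b a, SP.R b a → ∀ k, 1 ≤ k → ∀ s ∈ Sk f k, b ∈ SP.Qs s →
      ∀ η ∈ Tk f k, a ∈ SP.Pn η → η ∈ s := by
    rintro b a (⟨y, x, rfl, rfl, hr⟩ | ⟨y, x, rfl, rfl, hr⟩) k hk s hs hb η hη ha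
    · exact Me' y x hr k hk s hs ((QsM s ⟨k, hk, hs⟩ y).2 hb) η hη ((PnM η hη.2 x).2 ha)
    · exact Ne' y x hr k hk s hs ((QsN s ⟨k, hk, hs⟩ y).2 hb) η hη ((PnN η hη.2 x).2 ha)
  have hQcov : ∀ k, 1 ≤ k → (⋃ s ∈ Sk f k, SP.Qs s) = SP.Q := by
    intro k hk
    change _ = g' '' SM.Q ∪ h' '' SN.Q
    rw [← (Mc k hk).1, ← (Nc k hk).1]
    simp only [SP, Set.image_iUnion, Set.iUnion_union_distrib]
  refine ⟨P, SP, ⟨⟨?_, ?_⟩, ?_, ?_, ?_, ?_, hRQP, ?_, hedge⟩, g', h',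
    ⟨ig, PM, QM, PnM, QsM, RM⟩, ⟨ih, PN, QN, PnN, QsN, RN⟩, funext hcomm⟩
  · rw [Set.eq_univ_iff_forall]
    intro x
    rcases hsurj x with ⟨m, rfl⟩ | ⟨n, rfl⟩
    · have : m ∈ SM.P ∪ SM.Q := by rw [Ma]; trivial
      exact this.imp (PM m).1 (QM m).1
    · have : n ∈ SN.P ∪ SN.Q := by rw [Na]; trivial
      exact this.imp (PN n).1 (QN n).1
  · rw [Set.disjoint_left]
    intro x h1 h2
    rcases hsurj x with ⟨m, rfl⟩ | ⟨n, rfl⟩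
    · exact Set.disjoint_left.1 Ma' ((PM m).2 h1) ((QM m).2 h2)
    · exact Set.disjoint_left.1 Na' ((PN n).2 h1) ((QN n).2 h2)
  · intro k
    refine ⟨?_, ?_⟩
    · change _ = g' '' SM.P ∪ h' '' SN.P
      rw [← (Mb k).1, ← (Nb k).1]
      simp only [SP, Set.image_iUnion, Set.iUnion_union_distrib]
    · intro η hη η' hη' hne
      rw [Set.disjoint_left]
      intro x h1 h2
      rcases hsurj x with ⟨m, rfl⟩ | ⟨n, rfl⟩
      · exact Set.disjoint_left.1 ((Mb k).2 η hη η' hη' hne)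
          ((PnM η hη.2 m).2 h1) ((PnM η' hη'.2 m).2 h2)
      · exact Set.disjoint_left.1 ((Nb k).2 η hη η' hη' hne)
          ((PnN η hη.2 n).2 h1) ((PnN η' hη'.2 n).2 h2)
  · intro k hk
    refine ⟨hQcov k hk, ?_⟩
    intro s hs s' hs' hne
    rw [Set.disjoint_left]
    intro x h1 h2
    rcases hsurj x with ⟨m, rfl⟩ | ⟨n, rfl⟩
    · exact Set.disjoint_left.1 ((Mc k hk).2 s hs s' hs' hne)
        ((QsM s ⟨k, hk, hs⟩ m).2 h1) ((QsM s' ⟨k, hk, hs'⟩ m).2 h2)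
    · exact Set.disjoint_left.1 ((Nc k hk).2 s hs s' hs' hne)
        ((QsN s ⟨k, hk, hs⟩ n).2 h1) ((QsN s' ⟨k, hk, hs'⟩ n).2 h2)
  · intro η hη η' hη' hp
    exact Set.union_subset_union (Set.image_mono (Md η hη η' hη' hp))
      (Set.image_mono (Nd η hη η' hη' hp))
  · intro s hs s' hs' hp
    exact Set.union_subset_union (Set.image_mono (Md' s hs s' hs' hp))
      (Set.image_mono (Nd' s hs s' hs' hp))
  · rintro k η ⟨rfl, hη⟩ bv hbv ⟨x, hx, hR⟩
    rw [← hQcov (η.length + 1) (by omega)] at hx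
    simp only [Set.mem_iUnion] at hx
    obtain ⟨s, hs, hxs⟩ := hx
    refine hs.1.2.2.2.2 η ⟨by omega, hη⟩ fun l hl => ?_
    exact hedge x (bv l) (hR l hl) _ (by omega) s hs hxs _
      ⟨by simp, inT_append hη hl⟩ (hbv l hl)
end

section
/- Let μ be an infinite cardinal, let 2 ≤ k < ℓ < ω, and let λ = μ^{+ℓ} (the ℓ-th cardinal successor of μ). Then for every function F assigning to each k-element subset v of λ a set F(v) ⊆ λ with v ⊆ F(v) and |F(v)| ≤ μ, there exists a (k+1)-element subset w of λ such that for every k-element subset v of w we have w ⊄ F(v); equivalently, for each α ∈ w, α ∉ F(w ∖ {α}). -/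
open Cardinal

theorem free_aux {L : Type u} (μ : Cardinal.{u}) (hμ : ℵ₀ ≤ μ) (k : ℕ) :
    ∀ (A : Set L) (F : Finset L → Set L),
      (Order.succ : Cardinal.{u} → Cardinal.{u})^[k+1] μ ≤ #A → (∀ v, #(F v) ≤ μ) →
      ∃ w : Finset L, (↑w : Set L) ⊆ A ∧ w.card = k + 1 ∧
        ∀ w' : Finset L, ∀ y, y ∉ w' → insert y (↑w' : Set L) = ↑w → y ∉ F w' := by
  classical
  have hle : ∀ n : ℕ, μ ≤ (Order.succ : Cardinal.{u} → Cardinal.{u})^[n] μ := by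
    intro n
    induction n with
    | zero => simp
    | succ n ih =>
      rw [Function.iterate_succ_apply']
      exact ih.trans (Order.le_succ _)
  induction k with
  | zero =>
    intro A F hA hF
    have : ∃ x ∈ A, x ∉ F ∅ := by
      by_contra! h
      have h1 : #A ≤ #(F ∅) := mk_le_mk_of_subset h
      have h2 := (hA.trans h1).trans (hF ∅)
      simp only [Function.iterate_succ_apply', Function.iterate_zero, id] at h2
      exact absurd h2 (not_le.2 (Order.lt_succ μ))
    obtain ⟨x, hx, hxF⟩ := this
    refine ⟨{x}, by simpa using hx, by simp, ?_⟩
    intro w' y hy hw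
    have hw2 : insert y w' = {x} := by
      apply Finset.coe_injective; simpa using hw
    have hyx : y = x := by
      have : y ∈ insert y w' := Finset.mem_insert_self _ _
      rw [hw2] at this; simpa using this
    have hw3 : w' = ∅ := by
      have := Finset.erase_insert hy
      rw [← this, hw2, hyx]; simp
    rw [hw3, hyx]; exact hxF
  | succ k ih =>
    intro A F hA hF
    set κ := (Order.succ : Cardinal.{u} → Cardinal.{u})^[k+1] μ with hκ
    have hκμ : μ ≤ κ := hle _
    have hA' : Order.succ κ ≤ #A := by
      rw [hκ, ← Function.iterate_succ_apply' (Order.succ : Cardinal.{u} → Cardinal.{u})]; exact hA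
    obtain ⟨B, hBA, hB⟩ := le_mk_iff_exists_subset.1 ((Order.le_succ κ).trans hA')
    have hinf : Infinite B := by
      rw [infinite_iff, hB]; exact hμ.trans hκμ
    let U : Set L := ⋃ v : Finset B, F (v.map (Function.Embedding.subtype _))
    have hU : #U ≤ κ := by
      refine (mk_iUnion_le_sum_mk).trans ?_
      refine (sum_le_sum _ (fun _ => μ) (fun v => hF _)).trans ?_
      rw [sum_const', mk_finset_of_infinite, hB]
      exact (mul_le_mul_right hκμ κ).trans (mul_eq_self (hμ.trans hκμ)).le
    have : ∃ x ∈ A, x ∉ B ∪ U := by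
      by_contra! h
      have h1 : #A ≤ #(B ∪ U : Set L) := mk_le_mk_of_subset h
      have h2 : #(B ∪ U : Set L) ≤ κ := by
        refine (mk_union_le _ _).trans ?_
        rw [hB]
        exact add_le_of_le (hμ.trans hκμ) le_rfl hU
      exact absurd ((hA'.trans h1).trans h2) (not_le.2 (Order.lt_succ κ))
    obtain ⟨x, hxA, hx⟩ := this
    have hxB : x ∉ B := fun h => hx (Or.inl h)
    have hxU : x ∉ U := fun h => hx (Or.inr h)
    obtain ⟨w, hwB, hwc, hw⟩ := ih B (fun u => F (insert x u)) hB.ge (fun v => hF _)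
    have hxw : x ∉ w := fun h => hxB (hwB h)
    refine ⟨insert x w, ?_, by rw [Finset.card_insert_of_notMem hxw, hwc], ?_⟩
    · rw [Finset.coe_insert]
      exact Set.insert_subset hxA (hwB.trans hBA)
    intro w' y hy he
    have he2 : insert y w' = insert x w := by
      apply Finset.coe_injective; simpa using he
    have hw' : w' = (insert x w).erase y := by rw [← he2, Finset.erase_insert hy]
    have hymem : y ∈ insert x w := he2 ▸ Finset.mem_insert_self _ _
    by_cases hyx : y = x
    · subst hyx
      rw [Finset.erase_insert hxw] at hw'
      subst hw'
      intro hyF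
      apply hxU
      refine Set.mem_iUnion.2 ⟨w'.subtype (· ∈ B), ?_⟩
      have : (w'.subtype (· ∈ B)).map (Function.Embedding.subtype _) = w' :=
        Finset.subtype_map_of_mem (fun a ha => hwB ha)
      rw [this]; exact hyF
    · have hyw : y ∈ w := (Finset.mem_insert.1 hymem).resolve_left hyx
      have := hw (w.erase y) y (by simp) (by
        rw [← Finset.coe_insert, Finset.insert_erase hyw])
      rw [hw', Finset.erase_insert_of_ne (Ne.symm hyx)]
      exact this

/-- **Free set theorem** `(λ, k, μ⁺) → k+1` for `λ = μ⁺ℓ`, `2 ≤ k < ℓ`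
(Kuratowski–Sierpiński).  Let `μ` be an infinite cardinal, `2 ≤ k < ℓ < ω`,
and let `L` be a set of cardinality `μ⁺ℓ` (the `ℓ`-th cardinal successor of
`μ`).  Then for every `F` assigning to each `k`-element subset `v` of `L` a
set `F v ⊆ L` with `v ⊆ F v` and `|F v| ≤ μ`, there is a `(k+1)`-element
subset `w` of `L` such that `w ⊄ F v` for every `k`-element subset `v ⊆ w`. -/
theorem free_set_theorem
    (μ : Cardinal.{u}) (hμ : ℵ₀ ≤ μ) (k ℓ : ℕ) (hk : 2 ≤ k) (hkl : k < ℓ)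
    (L : Type u) (hL : #L = (Order.succ : Cardinal.{u} → Cardinal.{u})^[ℓ] μ)
    (F : Finset L → Set L)
    (hF1 : ∀ v : Finset L, v.card = k → ↑v ⊆ F v)
    (hF2 : ∀ v : Finset L, v.card = k → #(F v) ≤ μ) :
    ∃ w : Finset L, w.card = k + 1 ∧
      ∀ v ⊆ w, v.card = k → ¬ (↑w : Set L) ⊆ F v := by
  classical
  have hmono : ∀ m n : ℕ, m ≤ n → (Order.succ : Cardinal.{u} → Cardinal.{u})^[m] μ ≤
      (Order.succ : Cardinal.{u} → Cardinal.{u})^[n] μ := by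
    intro m n h
    induction h with
    | refl => exact le_rfl
    | step _ ih =>
      rw [Function.iterate_succ_apply']
      exact ih.trans (Order.le_succ _)
  obtain ⟨w, -, hwc, hw⟩ := free_aux μ hμ k (Set.univ : Set L)
    (fun v => if v.card = k then F v else ∅)
    (by rw [mk_univ, hL]; exact hmono _ _ hkl)
    (by intro v; split_ifs with h
        · exact hF2 v h
        · simp)
  refine ⟨w, hwc, ?_⟩
  intro v hv hvc hwF
  obtain ⟨y, hyw, hyv⟩ : ∃ y ∈ w, y ∉ v := by
    by_contra! h
    have := Finset.card_le_card (show w ⊆ v from h)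
    omega
  have he : insert y v = w := by
    apply Finset.eq_of_subset_of_card_le
    · exact Finset.insert_subset hyw hv
    · rw [Finset.card_insert_of_notMem hyv]; omega
  have := hw v y hyv (by rw [← Finset.coe_insert, he])
  rw [if_pos hvc] at this
  exact this (hwF hyw)
end
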